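/- For all LBV structures P and Q and every context C{ }, there exists a derivation using only the switch rule s with premise C[P,Q] and conclusion [C{P}, Q]. -/

import Mathlib

/-!
By induction on the context, `Q` leaves it one layer at a time, so it is enough to cross a single
layer: `[[P,Q],R]` is equivalent to `[[P,R],Q]`, and one switch leads from `(R,[P,Q])` to
`[(R,P),Q]`.
-/

/-!
The deep-inference system LBV (the `BV`-free core system of the calculus of
structures of Guglielmi).  Structures are built from the unit `◦`, atoms `a`
and negated atoms `ā` by par `[P,Q]` and copar `(P,Q)`, and are identified
modulo the congruence generated by associativity, commutativity and the
unit laws `[P,◦]=P`, `(P,◦)=P`.  The rules `ai↓`, `s` (and the atomic cut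
`ai↑`) apply inside an arbitrary one-hole context and modulo the
equivalence.
-/

namespace LBV

/-- Structures: the unit `◦`, atoms, negated atoms, par `[P,Q]` and
copar `(P,Q)`. -/
inductive St : Type where
  | unit : St
  | pos  : ℕ → St
  | neg  : ℕ → St
  | par  : St → St → St
  | cop  : St → St → St
deriving DecidableEq

/-- Negation: `¬◦ = ◦`, `¬[P,Q] = (¬P,¬Q)`, `¬(P,Q) = [¬P,¬Q]`, `¬¬P = P`. -/
def St.negS : St → St
  | .unit => .unit
  | .pos a => .neg a
  | .neg a => .pos a
  | .par P Q => .cop P.negS Q.negS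
  | .cop P Q => .par P.negS Q.negS

/-- Atoms are the propositional symbols and their negations. -/
def St.isAtom : St → Prop
  | .pos _ => True
  | .neg _ => True
  | _ => False

/-- Syntactic equivalence of structures: the smallest congruence generated
by associativity and commutativity of par and copar and the unit laws
`[P,◦]=P` and `(P,◦)=P`. -/
inductive Equiv : St → St → Prop where
  | refl (P : St) : Equiv P P
  | symm {P Q : St} : Equiv P Q → Equiv Q P
  | trans {P Q R : St} : Equiv P Q → Equiv Q R → Equiv P R
  | parComm (P Q : St) : Equiv (.par P Q) (.par Q P)
  | copComm (P Q : St) : Equiv (.cop P Q) (.cop Q P)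
  | parAssoc (P Q R : St) : Equiv (.par (.par P Q) R) (.par P (.par Q R))
  | copAssoc (P Q R : St) : Equiv (.cop (.cop P Q) R) (.cop P (.cop Q R))
  | parUnit (P : St) : Equiv (.par P .unit) P
  | copUnit (P : St) : Equiv (.cop P .unit) P
  | parCongr {P P' Q Q' : St} :
      Equiv P P' → Equiv Q Q' → Equiv (.par P Q) (.par P' Q')
  | copCongr {P P' Q Q' : St} :
      Equiv P P' → Equiv Q Q' → Equiv (.cop P Q) (.cop P' Q')

/-- One-hole contexts. -/
inductive Ctx : Type where
  | hole : Ctx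
  | parL : Ctx → St → Ctx
  | parR : St → Ctx → Ctx
  | copL : Ctx → St → Ctx
  | copR : St → Ctx → Ctx

/-- Plugging a structure into the hole of a context. -/
def Ctx.fill : Ctx → St → St
  | .hole, P => P
  | .parL C Q, P => .par (C.fill P) Q
  | .parR Q C, P => .par Q (C.fill P)
  | .copL C Q, P => .cop (C.fill P) Q
  | .copR Q C, P => .cop Q (C.fill P)

/-- Names of the rules: interaction `ai↓`, co-interaction (atomic cut)
`ai↑`, and switch `s`. -/
inductive Rule : Type where
  | aiDown | aiUp | s
deriving DecidableEq

/-- The rules read at the root of a structure (premise on the left,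
conclusion on the right). -/
inductive RootStep : Rule → St → St → Prop where
  | aiDown (A : St) (h : A.isAtom) : RootStep .aiDown .unit (.par A A.negS)
  | aiUp (A : St) (h : A.isAtom) : RootStep .aiUp (.cop A A.negS) .unit
  | s (P Q R : St) : RootStep .s (.cop P (.par Q R)) (.par (.cop P Q) R)

/-- One inference step using a rule from the set `Rs`, applied inside an
arbitrary context and modulo the equivalence. -/
def Step (Rs : Set Rule) (P Q : St) : Prop :=
  ∃ r ∈ Rs, ∃ (C : Ctx) (P' Q' : St),
    RootStep r P' Q' ∧ Equiv P (C.fill P') ∧ Equiv (C.fill Q') Q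

/-- Derivations over an arbitrary step relation: a finite sequence of rule
instances from the premise to the conclusion (modulo the equivalence). -/
inductive Deriv (Stp : St → St → Prop) : St → St → Prop where
  | eqv {P Q : St} : Equiv P Q → Deriv Stp P Q
  | step {P Q R : St} : Stp P Q → Deriv Stp Q R → Deriv Stp P R

/-- The rules of the system LBV. -/
def LBVRules : Set Rule := {.aiDown, .s}

/-- Derivations in LBV. -/
def DerivLBV (P Q : St) : Prop := Deriv (Step LBVRules) P Q

/-- A proof of `Q` in LBV is a derivation from the unit `◦` to `Q`. -/
def ProofLBV (Q : St) : Prop := DerivLBV .unit Q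

end LBV

namespace LBV

/-- The composite context `C{D{ }}`, used to carry out a rule instance inside a further
context. -/
def Ctx.comp : Ctx → Ctx → Ctx
  | .hole, D => D
  | .parL C R, D => .parL (C.comp D) R
  | .parR R C, D => .parR R (C.comp D)
  | .copL C R, D => .copL (C.comp D) R
  | .copR R C, D => .copR R (C.comp D)

theorem Ctx.fill_comp (C D : Ctx) (P : St) : (C.comp D).fill P = C.fill (D.fill P) := by
  induction C <;> simp [Ctx.comp, Ctx.fill, *]

theorem Equiv.fill (C : Ctx) {P Q : St} (h : Equiv P Q) : Equiv (C.fill P) (C.fill Q) := by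
  induction C with
  | hole => exact h
  | parL C R ih => exact .parCongr ih (.refl R)
  | parR R C ih => exact .parCongr (.refl R) ih
  | copL C R ih => exact .copCongr ih (.refl R)
  | copR R C ih => exact .copCongr (.refl R) ih

theorem Equiv.par_right_comm (P Q R : St) :
    Equiv (.par (.par P Q) R) (.par (.par P R) Q) :=
  (Equiv.parAssoc P Q R).trans
    ((Equiv.parCongr (.refl P) (.parComm Q R)).trans (Equiv.parAssoc P R Q).symm)

section

variable {Rs : Set Rule} {P Q R : St}

theorem RootStep.step {r : Rule} (h : RootStep r P Q) (hr : r ∈ Rs) : Step Rs P Q :=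
  ⟨r, hr, .hole, P, Q, h, .refl P, .refl Q⟩

theorem Step.of_equiv_left (h : Equiv P Q) (hs : Step Rs Q R) : Step Rs P R := by
  obtain ⟨r, hr, C, P', Q', hroot, hpremise, hconclusion⟩ := hs
  exact ⟨r, hr, C, P', Q', hroot, h.trans hpremise, hconclusion⟩

theorem Step.fill (C : Ctx) (hs : Step Rs P Q) : Step Rs (C.fill P) (C.fill Q) := by
  obtain ⟨r, hr, D, P', Q', hroot, hpremise, hconclusion⟩ := hs
  refine ⟨r, hr, C.comp D, P', Q', hroot, ?_, ?_⟩
  · simpa only [Ctx.fill_comp] using hpremise.fill C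
  · simpa only [Ctx.fill_comp] using hconclusion.fill C

theorem Deriv.of_step {Stp : St → St → Prop} (hs : Stp P Q) : Deriv Stp P Q :=
  .step hs (.eqv (.refl Q))

theorem Deriv.of_equiv_left (h : Equiv P Q) (d : Deriv (Step Rs) Q R) :
    Deriv (Step Rs) P R := by
  cases d with
  | eqv h' => exact .eqv (h.trans h')
  | step hs d => exact .step (hs.of_equiv_left h) d

theorem Deriv.trans (d : Deriv (Step Rs) P Q) (e : Deriv (Step Rs) Q R) :
    Deriv (Step Rs) P R := by
  induction d with
  | eqv h => exact e.of_equiv_left h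
  | step hs _ ih => exact .step hs (ih e)

theorem Deriv.fill (C : Ctx) (d : Deriv (Step Rs) P Q) :
    Deriv (Step Rs) (C.fill P) (C.fill Q) := by
  induction d with
  | eqv h => exact .eqv (h.fill C)
  | step hs _ ih => exact .step (hs.fill C) ih

theorem Deriv.switch_right (hs : Rule.s ∈ Rs) (P Q R : St) :
    Deriv (Step Rs) (.cop P (.par Q R)) (.par (.cop P Q) R) :=
  .of_step ((RootStep.s P Q R).step hs)

theorem Deriv.switch_left (hs : Rule.s ∈ Rs) (P Q R : St) :
    Deriv (Step Rs) (.cop (.par P Q) R) (.par (.cop P R) Q) :=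
  ((Deriv.switch_right hs R P Q).of_equiv_left (.copComm (.par P Q) R)).trans
    (.eqv (.parCongr (.copComm R P) (.refl Q)))

end

/-- Proposition: context insertion for LBV.
For all structures `P`, `Q` and every context `C{ }`, there is a derivation
using only the switch rule `s` with premise `C[P,Q]` and conclusion
`[C{P}, Q]`. -/
theorem ctx_insertion (P Q : St) (C : Ctx) :
    Deriv (Step {Rule.s}) (C.fill (.par P Q)) (.par (C.fill P) Q) := by
  induction C with
  | hole => exact .eqv (.refl (.par P Q))
  | parL C R ih =>
    exact (ih.fill (.parL .hole R)).trans (.eqv (.par_right_comm (C.fill P) Q R))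
  | parR R C ih =>
    exact (ih.fill (.parR R .hole)).trans (.eqv (Equiv.parAssoc R (C.fill P) Q).symm)
  | copL C R ih =>
    exact (ih.fill (.copL .hole R)).trans (.switch_left (Set.mem_singleton Rule.s) (C.fill P) Q R)
  | copR R C ih =>
    exact (ih.fill (.copR R .hole)).trans (.switch_right (Set.mem_singleton Rule.s) R (C.fill P) Q)

end LBV
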